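/- Let (A, φ) be a noncommutative probability space, Φ̃ : H_S(A) → ℂ the character extending φ, and ρ̃ = log*(Φ̃) (the logarithm with respect to the convolution product, i.e., ρ̃ = Σ_{k≥1} ((−1)^{k+1}/k) (Φ̃ − ε_A)^{*k}). Then for every n ≥ 1, every t ∈ ST(n) and every word w = a_1⋯a_n with a_i ∈ A, ρ̃(t ⊗ w) = ω(sk(t)) · φ_{π(t)}(a_1,…,a_n). -/

import Mathlib

open scoped BigOperators

/-- Planar rooted trees (rose trees). -/
inductive PTree : Type
  | node : List PTree → PTree

namespace PTree

/-- The single-vertex tree (a leaf). -/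
abbrev leaf : PTree := .node []

/-- Subtree at a given path from the root (entries select children). -/
def subtreeAt : List ℕ → PTree → Option PTree
  | [], t => some t
  | i :: p, node cs => (cs[i]?).bind (subtreeAt p)

/-- `p` is (the path of) a vertex of `t`. -/
def IsVertex (t : PTree) (p : List ℕ) : Prop := (subtreeAt p t).isSome

/-- `p` is a leaf of `t`. -/
def IsLeafAt (t : PTree) (p : List ℕ) : Prop := subtreeAt p t = some leaf

/-- `p` is an internal (non-leaf) vertex of `t`. -/
def IsInternalAt (t : PTree) (p : List ℕ) : Prop :=
  ∃ cs, subtreeAt p t = some (node cs) ∧ cs ≠ []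

/-- Schröder trees: every internal vertex has at least two children. -/
inductive IsSchroder : PTree → Prop
  | leaf : IsSchroder (node [])
  | node (cs : List PTree) : 2 ≤ cs.length → (∀ c ∈ cs, IsSchroder c) → IsSchroder (node cs)

/-- Number of leaves of a tree. -/
noncomputable def numLeaves (t : PTree) : ℕ := Nat.card {p : List ℕ // IsLeafAt t p}

/-- Number of sectors between consecutive leaves. -/
noncomputable def numSectors (t : PTree) : ℕ := numLeaves t - 1

/-- Number of internal vertices. -/
noncomputable def numInternal (t : PTree) : ℕ := Nat.card {p : List ℕ // IsInternalAt t p}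

/-- The set of Schröder trees with `n+1` leaves. -/
def ST (n : ℕ) : Set PTree := {t | IsSchroder t ∧ numLeaves t = n + 1}

/-- Number of surjective strictly order-preserving maps from the poset of internal
vertices of `t` (i.e. the vertex poset of the skeleton `sk(t)`, with the root minimal,
the order being the ancestor/prefix order) onto `{1, …, k}`. This is `ω_k(sk(t))`. -/
noncomputable def omegaSkK (t : PTree) (k : ℕ) : ℕ :=
  Nat.card {f : {p : List ℕ // IsInternalAt t p} → Fin k //
    Function.Surjective f ∧ ∀ v w, v.1 <+: w.1 → v ≠ w → f v < f w}

/-- The Murua coefficient `ω(sk(t))` of the skeleton of `t`. -/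
noncomputable def omegaSk (t : PTree) : ℂ :=
  ∑ k ∈ Finset.Icc 1 (numInternal t), ((-1 : ℂ) ^ (k + 1) / (k : ℂ)) * (omegaSkK t k : ℂ)

/-- The subtree of `t` at path `p` (junk value: a leaf). -/
noncomputable def subtree! (t : PTree) (p : List ℕ) : PTree := (subtreeAt p t).getD leaf

/-- Number of leaves of `t` strictly to the left of the subtree at `p`. -/
noncomputable def leavesBefore (t : PTree) (p : List ℕ) : ℕ :=
  Nat.card {q : List ℕ // IsLeafAt t q ∧ List.Lex (· < ·) q p ∧ ¬ p <+: q}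

/-- Sector number `i` (0-indexed: the sector between the `(i+1)`-st and `(i+2)`-nd leaves of `t`)
lies strictly inside the subtree of `t` rooted at `p`. -/
def SectorIn (t : PTree) (p : List ℕ) (i : ℕ) : Prop :=
  leavesBefore t p ≤ i ∧ i + 2 ≤ leavesBefore t p + numLeaves (subtree! t p)

/-- The internal vertex `v` of `t` owns sector `i`: the sector lies in the corolla at `v`,
i.e. inside the subtree at `v` but not inside the subtree at any strictly deeper vertex. -/
def OwnsSector (t : PTree) (v : List ℕ) (i : ℕ) : Prop :=
  IsInternalAt t v ∧ SectorIn t v i ∧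
    ∀ w, IsInternalAt t w → v <+: w → w ≠ v → ¬ SectorIn t w i

/-- Sectors `i` and `j` belong to the same block of the noncrossing partition `π(t)`. -/
def SameOwner (t : PTree) (i j : ℕ) : Prop := ∃ v, OwnsSector t v i ∧ OwnsSector t v j

open Classical in
/-- `φ_{π(t)}(a_1,…,a_n)`: the product over the blocks of the noncrossing partition `π(t)`
(one block per internal vertex `v`, consisting of the sectors owned by `v`) of `φ` applied to
the ordered product of the corresponding letters of `w`. -/
noncomputable def phiPi {A : Type*} [Ring A] (φ : A → ℂ) (t : PTree) (w : List A) : ℂ :=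
  ∏ᶠ v ∈ {v : List ℕ | IsInternalAt t v},
    φ ((((List.range w.length).filter fun i => OwnsSector t v i).map fun i => w.getD i 0).prod)

/-- A corolla: a root whose (at least two) children are all leaves. -/
def corolla (m : ℕ) : PTree := node (List.replicate m leaf)

/-- `t` is a corolla. -/
def IsCorolla (t : PTree) : Prop := ∃ m, 2 ≤ m ∧ t = corolla m

/-- Graft a tree `s` onto the leftmost leaf of `t`. -/
def graftLeftmost : PTree → PTree → PTree
  | node [], s => s
  | node (c :: cs), s => node (graftLeftmost c s :: cs)

/-- Trees obtained from the single-vertex tree by repeatedly grafting a corolla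
onto the leftmost leaf. -/
inductive IsBST : PTree → Prop
  | single : IsBST leaf
  | graft (t : PTree) (m : ℕ) : IsBST t → 2 ≤ m → IsBST (graftLeftmost t (corolla m))

/-- Schröder trees whose leftmost child of the root is a leaf. -/
def IsPST (t : PTree) : Prop := ∃ cs, t = node (leaf :: cs)

end PTree
namespace PTree

mutual
  /-- List of all vertex paths of a tree. -/
  def verticesList : PTree → List (List ℕ)
    | .node cs => [] :: verticesListAux 0 cs
  def verticesListAux : ℕ → List PTree → List (List ℕ)
    | _, [] => []
    | i, c :: cs => (verticesList c).map (i :: ·) ++ verticesListAux (i + 1) cs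
end

open Classical in
/-- The `Finset` of internal vertices of `t`. -/
noncomputable def internalFinset (t : PTree) : Finset (List ℕ) :=
  ((verticesList t).filter fun p => decide (IsInternalAt t p)).toFinset

open Classical in
/-- The admissible cuts of a Schröder tree `t`: sets of internal vertices such that every
path from the root to a leaf contains at most one of them (equivalently, antichains for
the ancestor/prefix order). -/
noncomputable def cutsFinset (t : PTree) : Finset (Finset (List ℕ)) :=
  (internalFinset t).powerset.filter fun c => ∀ v ∈ c, ∀ w ∈ c, v ≠ w → ¬ v <+: w

/-- A vertex path lies on the leftmost branch iff it consists of zeros. -/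
def OnLeftBranch (v : List ℕ) : Prop := v = List.replicate v.length 0

open Classical in
/-- `Adm_≺(t)`: admissible cuts whose trunk contains the leftmost leaf of `t`,
i.e. cuts containing no vertex of the leftmost branch. -/
noncomputable def cutsPrecFinset (t : PTree) : Finset (Finset (List ℕ)) :=
  (cutsFinset t).filter fun c => ∀ v ∈ c, ¬ OnLeftBranch v

open Classical in
/-- `Adm(t) \ Adm_≺(t)`: the admissible cuts containing a vertex of the leftmost branch. -/
noncomputable def cutsSuccFinset (t : PTree) : Finset (Finset (List ℕ)) :=
  (cutsFinset t).filter fun c => ∃ v ∈ c, OnLeftBranch v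

/-- Replace the subtree at a given path by a leaf. -/
def replaceLeaf : List ℕ → PTree → PTree
  | [], _ => leaf
  | i :: p, node cs => node (cs.set i (replaceLeaf p (cs.getD i leaf)))

/-- The vertices of a cut, sorted from left to right. -/
noncomputable def sortCut (t : PTree) (c : Finset (List ℕ)) : List (List ℕ) :=
  c.toList.mergeSort fun v w => Nat.ble (leavesBefore t v) (leavesBefore t w)

/-- The trunk `R_c(t)`: replace the subtree at each vertex of the cut by a leaf. -/
noncomputable def trunkTree (t : PTree) (c : Finset (List ℕ)) : PTree :=
  (sortCut t c).foldl (fun s v => replaceLeaf v s) t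

open Classical in
/-- Sector `i` of `t` is removed by the cut `c` (it lies in one of the pruned subtrees). -/
noncomputable def RemovedIdx (t : PTree) (c : Finset (List ℕ)) (i : ℕ) : Prop :=
  ∃ v ∈ c, leavesBefore t v ≤ i ∧ i < leavesBefore t v + numSectors (subtree! t v)

/-- A decorated forest: a list of Schröder trees, each `t` decorated by a word of length
`numSectors t` labelling the sectors between consecutive leaves from left to right. -/
abbrev DForest (A : Type*) := List (PTree × List A)

/-- A genuine decorated tree: a non-unit Schröder tree with matching decoration. -/
def GoodTree {A : Type*} (d : PTree × List A) : Prop :=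
  IsSchroder d.1 ∧ d.1 ≠ leaf ∧ d.2.length = numSectors d.1

/-- A genuine decorated forest. -/
def GoodForest {A : Type*} (F : DForest A) : Prop := ∀ d ∈ F, GoodTree d

open Classical in
/-- The decoration of the trunk `R_c(t ⊗ w)`: the letters of `w` at the sectors
not removed by the cut, in their original order. -/
noncomputable def trunkWord {A : Type*} [Zero A] (t : PTree) (c : Finset (List ℕ))
    (w : List A) : List A :=
  (((List.range w.length).filter fun i => decide (¬ RemovedIdx t c i)).map fun i => w.getD i 0)

open Classical in
/-- The trunk `R_c(t ⊗ w)` as a decorated forest (empty if the trunk is the unit,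
i.e. the single-leaf tree, which is identified with `1`). -/
noncomputable def trunkPart {A : Type*} [Zero A] (d : PTree × List A)
    (c : Finset (List ℕ)) : DForest A :=
  if trunkTree d.1 c = leaf then [] else [(trunkTree d.1 c, trunkWord d.1 c d.2)]

/-- The pruning `P_c(t ⊗ w)`: the ordered forest of decorated subtrees rooted at the
vertices of the cut (left to right), each carrying the contiguous subword of `w`
decorating its sectors. -/
noncomputable def prunePart {A : Type*} (d : PTree × List A)
    (c : Finset (List ℕ)) : DForest A :=
  (sortCut d.1 c).map fun v =>
    (subtree! d.1 v, (d.2.drop (leavesBefore d.1 v)).take (numSectors (subtree! d.1 v)))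

/-- All splittings `R_c(F) ⊗ P_c(F)` of a decorated forest given by tuples of admissible
cuts (one cut per tree): the combinatorial coproduct `δ_A`. -/
noncomputable def forestSplits {A : Type*} [Zero A] :
    DForest A → List (DForest A × DForest A)
  | [] => [([], [])]
  | d :: ds => (cutsFinset d.1).toList.flatMap fun c =>
      (forestSplits ds).map fun pr => (trunkPart d c ++ pr.1, prunePart d c ++ pr.2)

/-- The splittings appearing in `δ_{≺,A}`: the first tree is cut along `Adm_≺`, the
remaining ones along all admissible cuts. -/
noncomputable def forestSplitsPrec {A : Type*} [Zero A] :
    DForest A → List (DForest A × DForest A)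
  | [] => []
  | d :: ds => (cutsPrecFinset d.1).toList.flatMap fun c =>
      (forestSplits ds).map fun pr => (trunkPart d c ++ pr.1, prunePart d c ++ pr.2)

/-- The splittings appearing in `δ_{≻,A} = δ_A − δ_{≺,A}`. -/
noncomputable def forestSplitsSucc {A : Type*} [Zero A] :
    DForest A → List (DForest A × DForest A)
  | [] => []
  | d :: ds => (cutsSuccFinset d.1).toList.flatMap fun c =>
      (forestSplits ds).map fun pr => (trunkPart d c ++ pr.1, prunePart d c ++ pr.2)

/-- The convolution product `f * g = m_ℂ ∘ (f ⊗ g) ∘ δ_A` of linear functionals on the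
Hopf algebra `H_S(A)` of decorated Schröder trees (described on the basis of decorated
forests). -/
noncomputable def convD {A : Type*} [Zero A] (f g : DForest A → ℂ) : DForest A → ℂ :=
  fun F => ((forestSplits F).map fun pr => f pr.1 * g pr.2).sum

/-- The left half-shuffle product `f ≺̃ g = m_ℂ ∘ (f ⊗ g) ∘ δ_{≺,A}`. -/
noncomputable def precD {A : Type*} [Zero A] (f g : DForest A → ℂ) : DForest A → ℂ :=
  fun F => ((forestSplitsPrec F).map fun pr => f pr.1 * g pr.2).sum

/-- The right half-shuffle product `f ≻̃ g = m_ℂ ∘ (f ⊗ g) ∘ δ_{≻,A}`. -/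
noncomputable def succD {A : Type*} [Zero A] (f g : DForest A → ℂ) : DForest A → ℂ :=
  fun F => ((forestSplitsSucc F).map fun pr => f pr.1 * g pr.2).sum

open Classical in
/-- The counit `ε_A` of `H_S(A)` as a functional. -/
noncomputable def epsD {A : Type*} : DForest A → ℂ := fun F => if F = [] then 1 else 0

open Classical in
/-- The character `Φ̃ : H_S(A) → ℂ` extending `φ`: it sends a decorated tree `t ⊗ w` to
`φ(a_1 ⋯ a_n)` if `t` is a corolla and to `0` otherwise, multiplicatively on forests. -/
noncomputable def charD {A : Type*} [Ring A] (φ : A → ℂ) : DForest A → ℂ :=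
  fun F => (F.map fun d => if IsCorolla d.1 then φ d.2.prod else 0).prod

/-- `Φ̂ = Φ̃ − ε_A`. -/
noncomputable def charHatD {A : Type*} [Ring A] (φ : A → ℂ) : DForest A → ℂ :=
  fun F => charD φ F - epsD F

/-- Convolution powers `f^{*k}` (with `f^{*0} = ε_A`). -/
noncomputable def convPowD {A : Type*} [Zero A] (f : DForest A → ℂ) : ℕ → DForest A → ℂ
  | 0 => epsD
  | k + 1 => convD f (convPowD f k)

/-- Left half-shuffle powers `α^{≺̃ k}`, with `α^{≺̃ 0} = ε_A` and
`α^{≺̃ k} = α ≺̃ α^{≺̃ (k−1)}`. -/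
noncomputable def precPowD {A : Type*} [Zero A] (α : DForest A → ℂ) : ℕ → DForest A → ℂ
  | 0 => epsD
  | k + 1 => precD α (precPowD α k)

/-- Right half-shuffle powers `α^{≻̃ k}`, with `α^{≻̃ 0} = ε_A` and
`α^{≻̃ k} = α^{≻̃ (k−1)} ≻̃ α`. -/
noncomputable def succPowD {A : Type*} [Zero A] (α : DForest A → ℂ) : ℕ → DForest A → ℂ
  | 0 => epsD
  | k + 1 => succD (succPowD α k) α

/-- The left half-shuffle exponential `E_≺̃(α) = Σ_{k ≥ 0} α^{≺̃ k}`. -/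
noncomputable def ePrecD {A : Type*} [Zero A] (α : DForest A → ℂ) : DForest A → ℂ :=
  fun F => ∑ᶠ k : ℕ, precPowD α k F

/-- The right half-shuffle exponential `E_≻̃(α) = Σ_{k ≥ 0} α^{≻̃ k}`. -/
noncomputable def eSuccD {A : Type*} [Zero A] (α : DForest A → ℂ) : DForest A → ℂ :=
  fun F => ∑ᶠ k : ℕ, succPowD α k F

/-- The convolution exponential `exp^*(α) = Σ_{k ≥ 0} α^{*k} / k!`. -/
noncomputable def expStarD {A : Type*} [Zero A] (α : DForest A → ℂ) : DForest A → ℂ :=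
  fun F => ∑ᶠ k : ℕ, ((k.factorial : ℂ))⁻¹ * convPowD α k F

/-- The convolution logarithm `log^*(Φ̃) = Σ_{k ≥ 1} ((−1)^{k+1}/k) (Φ̃ − ε_A)^{*k}`. -/
noncomputable def logStarD {A : Type*} [Ring A] (φ : A → ℂ) : DForest A → ℂ :=
  fun F => ∑ᶠ k ∈ Set.Ici (1 : ℕ), ((-1 : ℂ) ^ (k + 1) / (k : ℂ)) * convPowD (charHatD φ) k F

/-- An infinitesimal character of `H_S(A)`: it vanishes on the unit (empty forest) and on
products of two or more nonempty forests. -/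
def IsInfCharD {A : Type*} (α : DForest A → ℂ) : Prop :=
  α [] = 0 ∧ ∀ F G : DForest A, F ≠ [] → G ≠ [] → α (F ++ G) = 0

end PTree

/-!
Only two cuts of `t` contribute to `(Φ̃ * g)(t ⊗ w)`: the cut at the root, with trunk `1`, and the
cut at all internal children of the root, whose trunk is the corolla decorated by the block of
`π(t)` at the root. Hence `Φ̃^{*(k+1)}(t ⊗ w)` is `Φ̃^{*k}(t ⊗ w)` plus the value of `φ` on the root
block times the product of `Φ̃^{*k}` over the subtrees at those children. The number of strictly
order-preserving, not necessarily surjective, maps `sk(t) → {1, …, k}` obeys the same recursion: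
distinguish whether the root receives the smallest label. So `Φ̃^{*k}(t ⊗ w)` is this number times
`φ_{π(t)}(w)`. Since `ε_A` is a left unit, `(Φ̃ - ε_A)^{*k}` is the `k`-th forward difference at
`0` of `j ↦ Φ̃^{*j}`, and sorting the maps by their range shows that the `k`-th difference of their
number is `ω_k(sk(t))`.
-/

section StrictOrderCount

/-- The strict order polynomial of the poset `P`, evaluated at `k`. -/
noncomputable def strictOrderCount (P : Type*) [Preorder P] (k : ℕ) : ℕ :=
  Nat.card {f : P → Fin k // StrictMono f}

/-- The number `ω_k(P)` of strictly monotone maps from the poset `P` onto `Fin k`. -/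
noncomputable def surjStrictOrderCount (P : Type*) [Preorder P] (k : ℕ) : ℕ :=
  Nat.card {f : P → Fin k // Function.Surjective f ∧ StrictMono f}

variable {P Q : Type*} [Preorder P] [Preorder Q]

theorem strictOrderCount_congr (e : P ≃o Q) (k : ℕ) :
    strictOrderCount P k = strictOrderCount Q k :=
  Nat.card_congr <| (e.toEquiv.arrowCongr (Equiv.refl (Fin k))).subtypeEquiv fun f =>
    ⟨fun hf => hf.comp e.symm.strictMono, fun hf => by
      simpa [Function.comp_def] using hf.comp e.strictMono⟩

theorem strictOrderCount_zero [Nonempty P] : strictOrderCount P 0 = 0 :=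
  have : IsEmpty {f : P → Fin 0 // StrictMono f} :=
    ⟨fun f => isEmptyElim (f.1 (Classical.arbitrary P))⟩
  Nat.card_of_isEmpty

theorem surjStrictOrderCount_eq_zero [Finite P] {k : ℕ} (h : Nat.card P < k) :
    surjStrictOrderCount P k = 0 :=
  have : IsEmpty {f : P → Fin k // Function.Surjective f ∧ StrictMono f} :=
    ⟨fun f => h.not_ge (by simpa using Nat.card_le_card_of_surjective f.1 f.2.1)⟩
  Nat.card_of_isEmpty

theorem strictOrderCount_sigma {ι : Type*} [Fintype ι] {P : ι → Type*} [∀ i, Preorder (P i)]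
    (k : ℕ) : strictOrderCount (Σ i, P i) k = ∏ i, strictOrderCount (P i) k := by
  simp only [strictOrderCount]
  rw [← Nat.card_pi]
  refine Nat.card_congr <| ((Equiv.piCurry fun i _ => Fin k).subtypeEquiv fun f => ?_).trans
    Equiv.subtypePiEquivPi
  exact ⟨fun hf i a b hab => hf (Sigma.mk_lt_mk_iff.2 hab),
    fun hf _ _ hab => match hab with | .fiber i a b hab => hf i hab⟩

/-- Labellings whose minimum is positive are labellings with one label fewer. -/
def strictMonoPredEquiv (P : Type*) [PartialOrder P] [OrderBot P] (k : ℕ) :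
    {f : {f : P → Fin (k + 1) // StrictMono f} // f.1 ⊥ ≠ 0} ≃ {f : P → Fin k // StrictMono f} where
  toFun f :=
    have hf (a) : f.1.1 a ≠ 0 :=
      ((Fin.pos_iff_ne_zero.2 f.2).trans_le (f.1.2.monotone bot_le)).ne'
    ⟨fun a => (f.1.1 a).pred (hf a), fun _ _ h => Fin.pred_lt_pred_iff.2 (f.1.2 h)⟩
  invFun f := ⟨⟨fun a => (f.1 a).succ, fun _ _ h => Fin.succ_lt_succ_iff.2 (f.2 h)⟩,
    Fin.succ_ne_zero _⟩
  left_inv f := by simp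
  right_inv f := by simp

/-- Labellings of `WithBot P` giving `⊥` the label `0` are labellings of `P` with one label
fewer. -/
def strictMonoWithBotEquiv (P : Type*) [Preorder P] (k : ℕ) :
    {f : {f : WithBot P → Fin (k + 1) // StrictMono f} // f.1 ⊥ = 0} ≃
      {f : P → Fin k // StrictMono f} where
  toFun f :=
    have hf (a : P) : f.1.1 a ≠ 0 := ((Fin.zero_le _).trans_lt (f.1.2 (WithBot.bot_lt_coe a))).ne'
    ⟨fun a => (f.1.1 a).pred (hf a),
      fun _ _ h => Fin.pred_lt_pred_iff.2 (f.1.2 (WithBot.coe_lt_coe.2 h))⟩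
  invFun f := ⟨⟨WithBot.recBotCoe (C := fun _ => Fin (k + 1)) 0 fun a => (f.1 a).succ,
    WithBot.strictMono_iff.2
      ⟨fun _ _ h => Fin.succ_lt_succ_iff.2 (f.2 h), fun _ => Fin.succ_pos _⟩⟩, rfl⟩
  left_inv f := by
    ext a : 3
    induction a using WithBot.recBotCoe with
    | bot => exact f.2.symm
    | coe a => simp
  right_inv f := by simp

theorem strictOrderCount_withBot_succ {P : Type*} [PartialOrder P] [Finite P] (k : ℕ) :
    strictOrderCount (WithBot P) (k + 1) =
      strictOrderCount (WithBot P) k + strictOrderCount P k := by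
  classical
  rw [strictOrderCount, ← Nat.card_congr (Equiv.sumCompl fun f => f.1 ⊥ = 0), Nat.card_sum,
    Nat.card_congr (strictMonoWithBotEquiv P k), add_comm]
  exact congrArg (· + _) (Nat.card_congr (strictMonoPredEquiv (WithBot P) k))

/-- The strictly monotone map with range `S` obtained by composing a map onto `Fin S.card` with
the increasing enumeration of `S`. -/
def strictMonoOfRange {k : ℕ}
    (x : Σ S : Finset (Fin k), {f : P → Fin S.card // Function.Surjective f ∧ StrictMono f}) :
    {f : P → Fin k // StrictMono f} :=
  ⟨x.1.orderEmbOfFin rfl ∘ x.2.1, (x.1.orderEmbOfFin rfl).strictMono.comp x.2.2.2⟩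

theorem range_strictMonoOfRange {k : ℕ}
    (x : Σ S : Finset (Fin k), {f : P → Fin S.card // Function.Surjective f ∧ StrictMono f}) :
    Set.range (strictMonoOfRange x).1 = x.1 := by
  rw [strictMonoOfRange, x.2.2.1.range_comp, Finset.range_orderEmbOfFin]

theorem strictMonoOfRange_bijective (k : ℕ) :
    Function.Bijective (strictMonoOfRange (P := P) (k := k)) := by
  classical
  constructor
  · rintro ⟨S, f⟩ ⟨T, g⟩ h
    obtain rfl : S = T := by
      simpa only [range_strictMonoOfRange, Finset.coe_inj] using congrArg (Set.range ·.1) h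
    have hfg : f = g := Subtype.ext <| funext fun a =>
      (S.orderEmbOfFin rfl).injective (congrFun (congrArg Subtype.val h) a)
    rw [hfg]
  · intro f
    let S : Finset (Fin k) := (Set.range f.1).toFinite.toFinset
    have hS (a : P) : f.1 a ∈ S := by simp [S]
    let e := S.orderIsoOfFin rfl
    refine ⟨⟨S, fun a => e.symm ⟨f.1 a, hS a⟩, fun i => ?_, fun a b hab =>
      e.symm.strictMono (Subtype.mk_lt_mk.2 (f.2 hab))⟩, Subtype.ext (funext fun a => ?_)⟩
    · obtain ⟨a, ha⟩ : (e i : Fin k) ∈ Set.range f.1 := by simpa [S] using (e i).2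
      exact ⟨a, e.symm_apply_eq.2 (Subtype.ext ha)⟩
    · exact congrArg Subtype.val (e.apply_symm_apply ⟨f.1 a, hS a⟩)

open Finset in
theorem strictOrderCount_eq_sum_choose [Finite P] (k : ℕ) :
    strictOrderCount P k = ∑ j ∈ range (k + 1), k.choose j * surjStrictOrderCount P j := by
  rw [strictOrderCount, ← Nat.card_congr (Equiv.ofBijective _ (strictMonoOfRange_bijective k)),
    Nat.card_sigma, ← Finset.powerset_univ]
  exact (sum_powerset_apply_card (surjStrictOrderCount P)).trans (by simp)

open Finset in
theorem fwdDiff_iter_sum_choose_mul {R : Type*} [CommRing R] (b : ℕ → R) (k : ℕ) :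
    (fwdDiff 1)^[k] (fun n : ℕ => ∑ j ∈ range (n + 1), (n.choose j : R) * b j) 0 = b k := by
  induction k using Nat.strong_induction_on with
  | _ k ih =>
    -- Expand the value at `k` by the Gregory-Newton formula; by `ih`, all terms but the last agree.
    have hk := shift_eq_sum_fwdDiff_iter (1 : ℕ)
      (fun n : ℕ => ∑ j ∈ range (n + 1), (n.choose j : R) * b j) k 0
    have hlt : ∀ j ∈ range k, k.choose j • (fwdDiff 1)^[j]
        (fun n : ℕ => ∑ j ∈ range (n + 1), (n.choose j : R) * b j) 0 = k.choose j * b j :=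
      fun j hj => by rw [ih j (mem_range.1 hj), nsmul_eq_mul]
    rw [zero_add, smul_eq_mul, mul_one, sum_range_succ, sum_range_succ _ k, sum_congr rfl hlt,
      add_right_inj] at hk
    simpa only [Nat.choose_self, Nat.cast_one, one_mul, one_smul] using hk.symm

theorem fwdDiff_iter_strictOrderCount [Finite P] (R : Type*) [CommRing R] (k : ℕ) :
    (fwdDiff 1)^[k] (fun n : ℕ => (strictOrderCount P n : R)) 0 = surjStrictOrderCount P k := by
  simpa [strictOrderCount_eq_sum_choose] using
    fwdDiff_iter_sum_choose_mul (fun j => (surjStrictOrderCount P j : R)) k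

end StrictOrderCount

section Lists

theorem lt_append_iff_of_not_prefix {α : Type*} [LinearOrder α] {p q : List α} (h : ¬ p <+: q)
    (r : List α) : q < p ++ r ↔ q < p := by
  induction p generalizing q with
  | nil => exact absurd q.nil_prefix h
  | cons i p ih =>
    cases q with
    | nil => simp
    | cons j q =>
      rw [List.cons_append, List.cons_lt_cons_iff, List.cons_lt_cons_iff]
      refine or_congr_right (and_congr_right fun hji => ih ?_)
      rwa [hji, List.prefix_cons_inj] at h

theorem ncard_eq_add_ncard_preimage_append {α : Type*} {S : Set (List α)} (hS : S.Finite)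
    (p : List α) : S.ncard = {r ∈ S | ¬ p <+: r}.ncard + ((p ++ ·) ⁻¹' S).ncard := by
  have himage : (p ++ ·) '' ((p ++ ·) ⁻¹' S) = {r ∈ S | p <+: r} := by
    rw [Set.image_preimage_eq_inter_range]
    rfl
  rw [← Set.ncard_image_of_injective ((p ++ ·) ⁻¹' S) (List.append_right_injective p), himage,
    add_comm]
  exact (Set.ncard_inter_add_ncard_sdiff_eq_ncard S {r | p <+: r} hS).symm

variable {A : Type*} [Zero A] {w : List A}

open Classical in
/-- The letters of the word `w` at the (0-indexed) positions in `S`, in their original order. -/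
noncomputable def lettersAt (S : Set ℕ) (w : List A) : List A :=
  ((List.range w.length).filter (· ∈ S)).map (w.getD · 0)

theorem lettersAt_congr {S T : Set ℕ} (h : ∀ i < w.length, i ∈ S ↔ i ∈ T) :
    lettersAt S w = lettersAt T w :=
  congrArg (List.map _) (List.filter_congr fun i hi => by simpa using h i (List.mem_range.1 hi))

theorem lettersAt_eq_nil {S : Set ℕ} (h : ∀ i < w.length, i ∉ S) : lettersAt S w = [] := by
  simpa [lettersAt] using h

theorem lettersAt_append (S : Set ℕ) (u w : List A) :
    lettersAt S (u ++ w) = lettersAt S u ++ lettersAt ((u.length + ·) ⁻¹' S) w := by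
  simp only [lettersAt, List.length_append, List.range_add, List.filter_append, List.filter_map,
    List.map_append, List.map_map]
  congr 1
  · refine List.map_congr_left fun i hi => List.getD_append _ _ _ _ ?_
    exact List.mem_range.1 (List.mem_of_mem_filter hi)
  · refine congrArg₂ List.map (funext fun i => ?_) rfl
    simp [List.getElem?_append_right]

theorem lettersAt_eq_lettersAt_take_drop {S : Set ℕ} {a m : ℕ}
    (hS : ∀ i ∈ S, a ≤ i ∧ i < a + m) (h : a + m ≤ w.length) :
    lettersAt S w = lettersAt ((a + ·) ⁻¹' S) ((w.drop a).take m) := by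
  have ha : (w.take a).length = a := List.length_take_of_le (by omega)
  have hm : ((w.drop a).take m).length = m := List.length_take_of_le (by simp; omega)
  conv_lhs => rw [← w.take_append_drop a, ← (w.drop a).take_append_drop m]
  have hleft : lettersAt S (w.take a) = [] := lettersAt_eq_nil fun i hi hiS => by
    have := (hS i hiS).1
    omega
  have hright : lettersAt ((m + ·) ⁻¹' ((a + ·) ⁻¹' S)) ((w.drop a).drop m) = [] :=
    lettersAt_eq_nil fun i _ hiS => by
      have : a + (m + i) < a + m := (hS _ hiS).2
      omega
  rw [lettersAt_append, lettersAt_append, ha, hm, hleft, hright, List.nil_append, List.append_nil]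

end Lists

namespace PTree

section Paths

variable {t : PTree} {p q : List ℕ}

theorem subtreeAt_append (p q : List ℕ) (t : PTree) :
    subtreeAt (p ++ q) t = (subtreeAt p t).bind (subtreeAt q) := by
  induction p generalizing t with
  | nil => simp [subtreeAt]
  | cons i p ih =>
    obtain ⟨cs⟩ := t
    cases h : cs[i]? <;> simp [subtreeAt, h, ih]

theorem IsVertex.subtreeAt_eq (h : IsVertex t p) : subtreeAt p t = some (subtree! t p) := by
  obtain ⟨s, hs⟩ := Option.isSome_iff_exists.1 h
  simp [subtree!, hs]

theorem IsVertex.subtreeAt_append (h : IsVertex t p) (q : List ℕ) :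
    subtreeAt (p ++ q) t = subtreeAt q (subtree! t p) := by
  rw [PTree.subtreeAt_append, h.subtreeAt_eq, Option.bind_some]

theorem IsVertex.isLeafAt_append_iff (h : IsVertex t p) :
    IsLeafAt t (p ++ q) ↔ IsLeafAt (subtree! t p) q := by
  rw [IsLeafAt, h.subtreeAt_append, IsLeafAt]

theorem IsVertex.isInternalAt_append_iff (h : IsVertex t p) :
    IsInternalAt t (p ++ q) ↔ IsInternalAt (subtree! t p) q := by
  rw [IsInternalAt, h.subtreeAt_append, IsInternalAt]

theorem IsVertex.subtree!_append (h : IsVertex t p) (q : List ℕ) :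
    subtree! t (p ++ q) = subtree! (subtree! t p) q := by
  rw [subtree!, h.subtreeAt_append, ← subtree!]

theorem IsVertex.of_prefix (h : IsVertex t q) (hpq : p <+: q) : IsVertex t p := by
  obtain ⟨r, rfl⟩ := hpq
  rw [IsVertex, PTree.subtreeAt_append] at h
  exact Option.isSome_of_isSome_bind h

theorem subtree!_nil (t : PTree) : subtree! t [] = t := by
  simp [subtree!, subtreeAt]

theorem isInternalAt_nil_iff : IsInternalAt t [] ↔ t ≠ leaf := by
  obtain ⟨cs⟩ := t
  simp [IsInternalAt, subtreeAt, leaf]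

theorem not_isInternalAt_leaf : ¬ IsInternalAt leaf p := by
  cases p <;> simp [IsInternalAt, subtreeAt, leaf]

theorem IsLeafAt.isVertex (h : IsLeafAt t p) : IsVertex t p := by
  rw [IsVertex, h, Option.isSome_some]

theorem IsInternalAt.isVertex (h : IsInternalAt t p) : IsVertex t p := by
  obtain ⟨cs, h, -⟩ := h
  rw [IsVertex, h, Option.isSome_some]

theorem isInternalAt_iff : IsInternalAt t p ↔ IsVertex t p ∧ subtree! t p ≠ leaf := by
  refine ⟨fun h => ⟨h.isVertex, ?_⟩, fun ⟨h, hne⟩ => ?_⟩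
  · rwa [← isInternalAt_nil_iff, ← h.isVertex.isInternalAt_append_iff, List.append_nil]
  · rwa [← List.append_nil p, h.isInternalAt_append_iff, isInternalAt_nil_iff]

theorem IsInternalAt.ne_leaf (h : IsInternalAt t p) : t ≠ leaf := by
  rintro rfl
  exact not_isInternalAt_leaf h

theorem IsInternalAt.of_prefix (h : IsInternalAt t q) (hpq : p <+: q) : IsInternalAt t p := by
  obtain ⟨r, rfl⟩ := hpq
  have hp : IsVertex t p := h.isVertex.of_prefix (List.prefix_append p r)
  exact isInternalAt_iff.2 ⟨hp, (hp.isInternalAt_append_iff.1 h).ne_leaf⟩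

theorem mem_verticesListAux {cs : List PTree} {i : ℕ} (o : ℕ) (hi : i < cs.length)
    (h : q ∈ verticesList cs[i]) : (o + i) :: q ∈ verticesListAux o cs := by
  induction cs generalizing i o with
  | nil => simp at hi
  | cons c cs ih =>
    rw [verticesListAux, List.mem_append]
    cases i with
    | zero => exact .inl (by simpa using h)
    | succ i =>
      rw [show o + (i + 1) = o + 1 + i by ring]
      exact .inr (ih (o + 1) (by simpa using hi) (by simpa using h))

theorem IsVertex.mem_verticesList (h : IsVertex t p) : p ∈ verticesList t := by
  induction p generalizing t with
  | nil => cases t; simp [verticesList]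
  | cons i p ih =>
    obtain ⟨cs⟩ := t
    obtain ⟨c, hc, hp⟩ : ∃ c, cs[i]? = some c ∧ IsVertex c p := by
      simpa [IsVertex, subtreeAt, Option.isSome_bind, Option.any_eq_true] using h
    obtain ⟨hi, rfl⟩ := List.getElem?_eq_some_iff.1 hc
    simpa [verticesList] using mem_verticesListAux 0 hi (ih hp)

theorem mem_internalFinset : p ∈ internalFinset t ↔ IsInternalAt t p := by
  simpa [internalFinset] using fun h : IsInternalAt t p => h.isVertex.mem_verticesList

theorem finite_isLeafAt (t : PTree) : {p | IsLeafAt t p}.Finite :=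
  (verticesList t).finite_toSet.subset fun _ hp => IsLeafAt.isVertex hp |>.mem_verticesList

theorem exists_isLeafAt : (t : PTree) → ∃ p, IsLeafAt t p
  | node [] => ⟨[], rfl⟩
  | node (c :: _) => (exists_isLeafAt c).imp' (0 :: ·) fun p hp => by simpa [IsLeafAt, subtreeAt]

theorem numLeaves_pos (t : PTree) : 0 < numLeaves t :=
  have : Finite {p // IsLeafAt t p} := (finite_isLeafAt t).to_subtype
  Nat.card_pos_iff.2 ⟨(exists_isLeafAt t).elim fun p hp => ⟨p, hp⟩, this⟩

theorem numLeaves_leaf : numLeaves leaf = 1 := by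
  have h (p : List ℕ) : IsLeafAt leaf p ↔ p = [] := by cases p <;> simp [IsLeafAt, subtreeAt]
  simp [numLeaves, h]

end Paths

section Leaves

variable {t : PTree} {p q : List ℕ}

theorem leavesBefore_eq_ncard (t : PTree) (p : List ℕ) :
    leavesBefore t p = {q | IsLeafAt t q ∧ q < p ∧ ¬ p <+: q}.ncard := rfl

theorem leavesBefore_nil (t : PTree) : leavesBefore t [] = 0 := by
  simp [leavesBefore]

theorem leavesBefore_append (hp : IsVertex t p) (q : List ℕ) :
    leavesBefore t (p ++ q) = leavesBefore t p + leavesBefore (subtree! t p) q := by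
  rw [leavesBefore_eq_ncard, ncard_eq_add_ncard_preimage_append
    ((finite_isLeafAt t).subset fun r hr => hr.1) p, leavesBefore_eq_ncard, leavesBefore_eq_ncard]
  have hlt {r s : List ℕ} : p ++ r < p ++ s ↔ r < s :=
    StrictMono.lt_iff_lt (f := (p ++ ·)) fun _ _ => List.append_left_lt
  congr 2 <;> ext r
  · have hr (h : ¬ p <+: r) : ¬ p ++ q <+: r := fun h' => h ((p.prefix_append q).trans h')
    have := @lt_append_iff_of_not_prefix ℕ _ p r
    grind
  · simp [hp.isLeafAt_append_iff, hlt, List.prefix_append_right_inj]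

theorem leavesBefore_add_numLeaves_le (hp : IsVertex t p) :
    leavesBefore t p + numLeaves (subtree! t p) ≤ numLeaves t := by
  have ht : numLeaves t = {q | IsLeafAt t q}.ncard := rfl
  have hsub : numLeaves (subtree! t p) = ((p ++ ·) ⁻¹' {q | IsLeafAt t q}).ncard :=
    congrArg Set.ncard (Set.ext fun q => hp.isLeafAt_append_iff.symm)
  rw [ht, ncard_eq_add_ncard_preimage_append (finite_isLeafAt t) p, hsub, leavesBefore_eq_ncard]
  gcongr ?_ + _
  exact Set.ncard_le_ncard (fun q hq => ⟨hq.1, hq.2.2⟩)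
    ((finite_isLeafAt t).subset fun q hq => hq.1)

end Leaves

section Sectors

variable {t : PTree} {p q : List ℕ} {i : ℕ}

theorem sectorIn_iff_lt : SectorIn t p i ↔
    leavesBefore t p ≤ i ∧ i < leavesBefore t p + numSectors (subtree! t p) := by
  have := numLeaves_pos (subtree! t p)
  rw [SectorIn, numSectors]
  omega

theorem sectorIn_nil_iff : SectorIn t [] i ↔ i < numSectors t := by
  simp [sectorIn_iff_lt, leavesBefore_nil, subtree!_nil]

theorem sectorIn_append_iff (hp : IsVertex t p) :
    SectorIn t (p ++ q) i ↔
      leavesBefore t p ≤ i ∧ SectorIn (subtree! t p) q (i - leavesBefore t p) := by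
  rw [SectorIn, SectorIn, leavesBefore_append hp, hp.subtree!_append]
  omega

theorem leavesBefore_add_numSectors_le (hp : IsVertex t p) :
    leavesBefore t p + numSectors (subtree! t p) ≤ numSectors t := by
  have := leavesBefore_add_numLeaves_le hp
  have := numLeaves_pos (subtree! t p)
  rw [numSectors, numSectors]
  omega

theorem SectorIn.lt_numSectors (h : SectorIn t p i) (hp : IsVertex t p) : i < numSectors t :=
  (sectorIn_iff_lt.1 h).2.trans_le (leavesBefore_add_numSectors_le hp)

theorem SectorIn.of_prefix (h : SectorIn t q i) (hq : IsVertex t q)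
    (hpq : p <+: q) : SectorIn t p i := by
  obtain ⟨r, rfl⟩ := hpq
  have hp : IsVertex t p := hq.of_prefix (p.prefix_append r)
  obtain ⟨hle, h⟩ := (sectorIn_append_iff hp).1 h
  have := h.lt_numSectors (by rwa [IsVertex, ← hp.subtreeAt_append])
  rw [sectorIn_iff_lt]
  omega

theorem ownsSector_append_iff (hp : IsVertex t p) :
    OwnsSector t (p ++ q) i ↔
      leavesBefore t p ≤ i ∧ OwnsSector (subtree! t p) q (i - leavesBefore t p) := by
  have hdeeper : (∀ v, IsInternalAt t v → p ++ q <+: v → v ≠ p ++ q → ¬ SectorIn t v i) ↔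
      ∀ v, IsInternalAt t (p ++ v) → q <+: v → v ≠ q → ¬ SectorIn t (p ++ v) i := by
    refine ⟨fun h v hv hqv hne => h _ hv ((List.prefix_append_right_inj p).2 hqv) (by simpa), ?_⟩
    rintro h _ hv ⟨v, rfl⟩ hne
    rw [List.append_assoc] at hv hne ⊢
    exact h (q ++ v) hv (q.prefix_append v) (by simpa using hne)
  simp only [OwnsSector, hdeeper, hp.isInternalAt_append_iff, sectorIn_append_iff hp]
  grind

theorem OwnsSector.lt_numSectors (h : OwnsSector t p i) : i < numSectors t :=
  h.2.1.lt_numSectors h.1.isVertex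

end Sectors

section Words

variable {A : Type*} {t : PTree} {p : List ℕ} {w : List A}

/-- The part of the decoration `w` of `t` lying on the sectors of the subtree at `v`. -/
noncomputable def subword (t : PTree) (v : List ℕ) (w : List A) : List A :=
  (w.drop (leavesBefore t v)).take (numSectors (subtree! t v))

theorem length_subword (hp : IsVertex t p) (hw : w.length = numSectors t) :
    (subword t p w).length = numSectors (subtree! t p) := by
  have := leavesBefore_add_numSectors_le hp
  rw [subword, List.length_take_of_le]
  rw [List.length_drop]
  omega

variable [Zero A]

/-- The letters of `w` in the block of `π(t)` attached to the internal vertex `v`. -/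
noncomputable def blockWord (t : PTree) (v : List ℕ) (w : List A) : List A :=
  lettersAt {i | OwnsSector t v i} w

theorem blockWord_append (hp : IsVertex t p) (hw : w.length = numSectors t) (q : List ℕ) :
    blockWord t (p ++ q) w = blockWord (subtree! t p) q (subword t p w) := by
  rw [blockWord, lettersAt_eq_lettersAt_take_drop (fun i hi => ?_)
    (hw ▸ leavesBefore_add_numSectors_le hp), blockWord, subword]
  · congr 1
    ext i
    simp [ownsSector_append_iff hp]
  · obtain ⟨hle, hi⟩ := (ownsSector_append_iff hp).1 hi
    have := hi.lt_numSectors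
    omega

end Words

section InternalVertices

variable {t : PTree} {p q : List ℕ}

/-- The poset of internal vertices of `t`, that is, of the vertices of `sk(t)`, ordered by
ancestry. -/
def Skeleton (t : PTree) : Type := {p : List ℕ // IsInternalAt t p}

namespace Skeleton

instance : PartialOrder (Skeleton t) where
  le v w := v.1 <+: w.1
  le_refl v := v.1.prefix_refl
  le_trans _ _ _ := List.IsPrefix.trans
  le_antisymm _ _ h h' := Subtype.ext (h.eq_of_length_le h'.length_le)

instance : Finite (Skeleton t) :=
  ((internalFinset t).finite_toSet.subset fun _ hp => mem_internalFinset.2 hp).to_subtype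

noncomputable instance : Fintype (Skeleton t) := Fintype.ofFinite _

end Skeleton

theorem numInternal_eq_card_skeleton (t : PTree) : numInternal t = Nat.card (Skeleton t) := rfl

theorem omegaSkK_eq_surjStrictOrderCount (t : PTree) (k : ℕ) :
    omegaSkK t k = surjStrictOrderCount (Skeleton t) k := by
  have hmono (f : Skeleton t → Fin k) :
      (∀ v w : Skeleton t, v.1 <+: w.1 → v ≠ w → f v < f w) ↔ StrictMono f :=
    ⟨fun h _ _ hvw => h _ _ hvw.le hvw.ne, fun h _ _ hvw hne => h (lt_of_le_of_ne hvw hne)⟩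
  exact Nat.card_congr (Equiv.subtypeEquivRight fun f => and_congr_right fun _ => hmono f)

/-- The cut of `t` at all the internal children of the root. -/
noncomputable def childCut (t : PTree) : Finset (List ℕ) :=
  (internalFinset t).filter (·.length = 1)

theorem mem_childCut : p ∈ childCut t ↔ IsInternalAt t p ∧ p.length = 1 := by
  rw [childCut, Finset.mem_filter, mem_internalFinset]

theorem isVertex_of_mem_childCut (h : p ∈ childCut t) : IsVertex t p :=
  (mem_childCut.1 h).1.isVertex

/-- The map into the skeleton of `t` from a root with the skeletons of the subtrees at the internal
children of the root of `t` grafted onto it; `Sigma` carries the disjoint union order. -/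
def Skeleton.ofChildren (h : t ≠ leaf) :
    WithBot (Σ v : childCut t, Skeleton (subtree! t v)) → Skeleton t :=
  WithBot.recBotCoe (C := fun _ => Skeleton t) ⟨[], isInternalAt_nil_iff.2 h⟩ fun x =>
    ⟨x.1 ++ x.2.1, (isVertex_of_mem_childCut x.1.2).isInternalAt_append_iff.2 x.2.2⟩

theorem Skeleton.ofChildren_le_ofChildren (h : t ≠ leaf)
    (x y : WithBot (Σ v : childCut t, Skeleton (subtree! t v))) :
    ofChildren h x ≤ ofChildren h y ↔ x ≤ y := by
  have hlen (v : childCut t) : v.1.length = 1 := (mem_childCut.1 v.2).2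
  induction x with
  | bot => exact iff_of_true (List.nil_prefix) bot_le
  | coe x =>
    obtain ⟨v, p⟩ := x
    induction y with
    | bot =>
      refine iff_of_false (fun hle => ?_) (WithBot.not_coe_le_bot _)
      have : (v.1 ++ p.1).length ≤ 0 := List.IsPrefix.length_le hle
      rw [List.length_append, hlen] at this
      omega
    | coe y =>
      obtain ⟨w, q⟩ := y
      rw [WithBot.coe_le_coe, Sigma.le_def]
      refine (List.prefix_append_inj_of_length_eq ((hlen v).trans (hlen w).symm)).trans ⟨?_, ?_⟩
      · rintro ⟨hvw, hpq⟩
        obtain rfl := Subtype.ext hvw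
        exact ⟨rfl, hpq⟩
      · rintro ⟨hvw : v = w, hpq⟩
        subst hvw
        exact ⟨rfl, hpq⟩

theorem Skeleton.ofChildren_surjective (h : t ≠ leaf) : Function.Surjective (ofChildren h) := by
  rintro ⟨p, hp⟩
  cases p with
  | nil => exact ⟨⊥, rfl⟩
  | cons i p =>
    have hi : [i] ∈ childCut t := mem_childCut.2 ⟨hp.of_prefix ⟨p, rfl⟩, rfl⟩
    exact ⟨↑(⟨⟨[i], hi⟩, p, (isVertex_of_mem_childCut hi).isInternalAt_append_iff.1 hp⟩ :
      Σ v : childCut t, Skeleton (subtree! t v)), rfl⟩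

/-- `Skeleton.ofChildren` as an order isomorphism. -/
noncomputable def skeletonOrderIso (h : t ≠ leaf) :
    WithBot (Σ v : childCut t, Skeleton (subtree! t v)) ≃o Skeleton t :=
  RelIso.ofSurjective (OrderEmbedding.ofMapLEIff _ (Skeleton.ofChildren_le_ofChildren h))
    (Skeleton.ofChildren_surjective h)

theorem strictOrderCount_skeleton_zero (h : t ≠ leaf) : strictOrderCount (Skeleton t) 0 = 0 :=
  have : Nonempty (Skeleton t) := ⟨⟨[], isInternalAt_nil_iff.2 h⟩⟩
  strictOrderCount_zero

theorem strictOrderCount_skeleton_succ (h : t ≠ leaf) (k : ℕ) :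
    strictOrderCount (Skeleton t) (k + 1) = strictOrderCount (Skeleton t) k +
      ∏ v ∈ childCut t, strictOrderCount (Skeleton (subtree! t v)) k := by
  rw [← strictOrderCount_congr (skeletonOrderIso h), ← strictOrderCount_congr (skeletonOrderIso h),
    strictOrderCount_withBot_succ, strictOrderCount_sigma,
    Finset.prod_coe_sort _ fun v => strictOrderCount (Skeleton (subtree! t v)) k]

theorem prod_skeleton {M : Type*} [CommMonoid M] (h : t ≠ leaf) (f : List ℕ → M) :
    ∏ v : Skeleton t, f v.1 =
      f [] * ∏ v ∈ childCut t, ∏ q : Skeleton (subtree! t v), f (v ++ q.1) := by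
  rw [← (skeletonOrderIso h).toEquiv.prod_comp]
  refine (Fintype.prod_option _).trans (congrArg (f [] * ·) ?_)
  rw [Fintype.prod_sigma]
  exact Finset.prod_coe_sort _ fun v => ∏ q : Skeleton (subtree! t v), f (v ++ q.1)

variable {A : Type*} [Ring A]

theorem phiPi_eq_prod_skeleton (φ : A → ℂ) (t : PTree) (w : List A) :
    phiPi φ t w = ∏ v : Skeleton t, φ (blockWord t v.1 w).prod := by
  rw [← finprod_eq_prod_of_fintype]
  exact (finprod_set_coe_eq_finprod_mem {v | IsInternalAt t v}).symm

theorem phiPi_eq_mul_prod (φ : A → ℂ) {w : List A} (h : t ≠ leaf) (hw : w.length = numSectors t) :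
    phiPi φ t w = φ (blockWord t [] w).prod *
      ∏ v ∈ childCut t, phiPi φ (subtree! t v) (subword t v w) := by
  simp only [phiPi_eq_prod_skeleton]
  rw [prod_skeleton h fun v => φ (blockWord t v w).prod]
  refine congrArg _ (Finset.prod_congr rfl fun v hv => Finset.prod_congr rfl fun q _ => ?_)
  rw [blockWord_append (isVertex_of_mem_childCut hv) hw]

end InternalVertices

section Cuts

variable {t : PTree} {c : Finset (List ℕ)} {p v : List ℕ}

theorem mem_cutsFinset : c ∈ cutsFinset t ↔
    (∀ v ∈ c, IsInternalAt t v) ∧ ∀ v ∈ c, ∀ w ∈ c, v ≠ w → ¬ v <+: w := by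
  simp only [cutsFinset, Finset.mem_filter, Finset.mem_powerset, Finset.subset_iff,
    mem_internalFinset]

theorem singleton_nil_mem_cutsFinset (h : t ≠ leaf) : {[]} ∈ cutsFinset t := by
  simpa [mem_cutsFinset, isInternalAt_nil_iff] using h

theorem childCut_mem_cutsFinset (t : PTree) : childCut t ∈ cutsFinset t := by
  refine mem_cutsFinset.2 ⟨fun v hv => (mem_childCut.1 hv).1, fun v hv w hw hne hvw => hne ?_⟩
  exact hvw.eq_of_length ((mem_childCut.1 hv).2.trans (mem_childCut.1 hw).2.symm)

theorem singleton_nil_ne_childCut (t : PTree) : {[]} ≠ childCut t := by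
  intro h
  have hnil : [] ∈ childCut t := h ▸ Finset.mem_singleton_self []
  simpa using (mem_childCut.1 hnil).2

theorem eq_singleton_nil_iff_of_mem_cutsFinset (hc : c ∈ cutsFinset t) : c = {[]} ↔ [] ∈ c := by
  refine ⟨fun h => h ▸ Finset.mem_singleton_self [], fun h => ?_⟩
  refine Finset.eq_singleton_iff_unique_mem.2 ⟨h, fun v hv => ?_⟩
  by_contra hne
  exact (mem_cutsFinset.1 hc).2 [] h v hv (Ne.symm hne) List.nil_prefix

theorem exists_mem_childCut_prefix (hp : IsInternalAt t p) (hne : p ≠ []) :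
    ∃ v ∈ childCut t, v <+: p := by
  obtain ⟨i, q, rfl⟩ := List.exists_cons_of_ne_nil hne
  exact ⟨[i], mem_childCut.2 ⟨hp.of_prefix ⟨q, rfl⟩, rfl⟩, q, rfl⟩

-- The vertices `p` on the right-hand side are the internal vertices of the trunk `R_c(t)`.
theorem eq_childCut_iff_of_mem_cutsFinset (ht : t ≠ leaf) (hc : c ∈ cutsFinset t) :
    c = childCut t ↔ ∀ p, (IsInternalAt t p ∧ ∀ v ∈ c, ¬ v <+: p) ↔ p = [] := by
  have hroot : IsInternalAt t [] := isInternalAt_nil_iff.2 ht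
  constructor
  · rintro rfl p
    constructor
    · rintro ⟨hp, hv⟩
      by_contra hne
      obtain ⟨v, hvc, hvp⟩ := exists_mem_childCut_prefix hp hne
      exact hv v hvc hvp
    · rintro rfl
      refine ⟨hroot, fun v hv hnil => ?_⟩
      simpa [List.prefix_nil.1 hnil] using (mem_childCut.1 hv).2
  · intro h
    have hnil : [] ∉ c := fun hmem => ((h []).2 rfl).2 [] hmem List.nil_prefix
    have hchild : childCut t ⊆ c := fun v hv => by
      obtain ⟨hint, hlen⟩ := mem_childCut.1 hv
      obtain ⟨u, hu, huv⟩ : ∃ u ∈ c, u <+: v := by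
        by_contra! hno
        simp [(h v).1 ⟨hint, hno⟩] at hlen
      have hpos := List.length_pos_iff.2 fun hu0 : u = [] => hnil (hu0 ▸ hu)
      rwa [← huv.eq_of_length_le (by omega)]
    refine Finset.Subset.antisymm (fun v hv => ?_) hchild
    obtain ⟨u, hu, huv⟩ := exists_mem_childCut_prefix ((mem_cutsFinset.1 hc).1 v hv)
      fun hv0 => hnil (hv0 ▸ hv)
    by_contra hvu
    exact (mem_cutsFinset.1 hc).2 u (hchild hu) v hv (fun h => hvu (h ▸ hu)) huv

theorem sortCut_perm (t : PTree) (c : Finset (List ℕ)) : (sortCut t c).Perm c.toList :=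
  List.mergeSort_perm _ _

theorem mem_sortCut : v ∈ sortCut t c ↔ v ∈ c := by
  rw [(sortCut_perm t c).mem_iff, Finset.mem_toList]

end Cuts

section Trunk

variable {t : PTree} {c : Finset (List ℕ)} {p v : List ℕ}

theorem isInternalAt_node_cons {cs : List PTree} {i : ℕ} :
    IsInternalAt (node cs) (i :: p) ↔ ∃ c, cs[i]? = some c ∧ IsInternalAt c p := by
  cases h : cs[i]? <;> simp [IsInternalAt, subtreeAt, h]

theorem isInternalAt_replaceLeaf :
    IsInternalAt (replaceLeaf v t) p ↔ IsInternalAt t p ∧ ¬ v <+: p := by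
  induction v generalizing t p with
  | nil => simp [replaceLeaf, not_isInternalAt_leaf]
  | cons i v ih =>
    obtain ⟨cs⟩ := t
    cases p with
    | nil => simp [replaceLeaf, isInternalAt_nil_iff, leaf]
    | cons j p =>
      rw [replaceLeaf, isInternalAt_node_cons, isInternalAt_node_cons, List.getElem?_set]
      by_cases hij : i = j
      · subst hij
        cases hi : cs[i]? with
        | none => simp [List.getElem?_eq_none_iff.1 hi]
        | some s =>
          obtain ⟨hlt, rfl⟩ := List.getElem?_eq_some_iff.1 hi
          simp [hlt, ih]
      · simp [hij]

theorem isInternalAt_trunkTree :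
    IsInternalAt (trunkTree t c) p ↔ IsInternalAt t p ∧ ∀ v ∈ c, ¬ v <+: p := by
  have hfold (l : List (List ℕ)) (s : PTree) :
      IsInternalAt (l.foldl (fun s v => replaceLeaf v s) s) p ↔
        IsInternalAt s p ∧ ∀ v ∈ l, ¬ v <+: p := by
    induction l generalizing s with
    | nil => simp
    | cons v l ih => simp [ih, isInternalAt_replaceLeaf, and_assoc]
  simp only [trunkTree, hfold, mem_sortCut]

theorem IsSchroder.of_mem {cs : List PTree} (h : IsSchroder (PTree.node cs)) {s : PTree}
    (hs : s ∈ cs) : IsSchroder s := by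
  cases h with
  | leaf => simp at hs
  | node _ _ h => exact h s hs

theorem IsSchroder.getD {cs : List PTree} (h : IsSchroder (PTree.node cs)) (i : ℕ) :
    IsSchroder (cs.getD i PTree.leaf) := by
  rcases lt_or_ge i cs.length with hi | hi
  · rw [List.getD_eq_getElem _ _ hi]
    exact h.of_mem (List.getElem_mem hi)
  · rw [List.getD_eq_default _ _ hi]
    exact .leaf

theorem IsSchroder.subtree! (h : IsSchroder t) (p : List ℕ) : IsSchroder (subtree! t p) := by
  induction p generalizing t with
  | nil => rwa [subtree!_nil]
  | cons i p ih =>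
    obtain ⟨cs⟩ := t
    cases hi : cs[i]? with
    | none =>
      simpa only [PTree.subtree!, subtreeAt, hi, Option.bind_none, Option.getD_none] using .leaf
    | some s =>
      simpa only [PTree.subtree!, subtreeAt, hi, Option.bind_some] using
        ih (h.of_mem (List.mem_of_getElem? hi))

theorem IsSchroder.replaceLeaf (h : IsSchroder t) (v : List ℕ) :
    IsSchroder (replaceLeaf v t) := by
  induction v generalizing t with
  | nil => exact .leaf
  | cons i v ih =>
    cases h with
    | leaf => exact .leaf
    | node cs hlen hcs =>
      refine .node _ (by rwa [List.length_set]) fun s hs => ?_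
      rcases List.mem_or_eq_of_mem_set hs with hs | rfl
      · exact hcs s hs
      · exact ih ((IsSchroder.node cs hlen hcs).getD i)

theorem IsSchroder.trunkTree (h : IsSchroder t) (c : Finset (List ℕ)) :
    IsSchroder (trunkTree t c) := by
  rw [PTree.trunkTree]
  induction sortCut t c generalizing t with
  | nil => exact h
  | cons v _ ih => exact ih (h.replaceLeaf v)

theorem IsSchroder.isCorolla_iff (h : IsSchroder t) :
    IsCorolla t ↔ ∀ p, IsInternalAt t p ↔ p = [] := by
  constructor
  · rintro ⟨m, hm, rfl⟩ p
    cases p with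
    | nil => simpa [isInternalAt_nil_iff, corolla] using Nat.ne_zero_of_lt hm
    | cons i p =>
      simp [corolla, isInternalAt_node_cons, List.getElem?_replicate, not_isInternalAt_leaf]
  · intro hp
    cases h with
    | leaf => exact absurd ((hp []).2 rfl) not_isInternalAt_leaf
    | node cs hlen hcs =>
      refine ⟨cs.length, hlen, congrArg PTree.node (List.eq_replicate_iff.2 ⟨rfl, fun s hs => ?_⟩)⟩
      obtain ⟨i, hi⟩ := List.mem_iff_getElem?.1 hs
      by_contra hne
      simpa using (hp [i]).1 (isInternalAt_node_cons.2 ⟨s, hi, isInternalAt_nil_iff.2 hne⟩)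

theorem trunkTree_eq_leaf_iff (ht : t ≠ leaf) (hc : c ∈ cutsFinset t) :
    trunkTree t c = leaf ↔ c = {[]} := by
  rw [eq_singleton_nil_iff_of_mem_cutsFinset hc, ← not_iff_not, ← ne_eq, ← isInternalAt_nil_iff,
    isInternalAt_trunkTree, isInternalAt_nil_iff]
  simp [ht]

theorem isCorolla_trunkTree_iff (hS : IsSchroder t) (ht : t ≠ leaf) (hc : c ∈ cutsFinset t) :
    IsCorolla (trunkTree t c) ↔ c = childCut t := by
  rw [(hS.trunkTree c).isCorolla_iff, eq_childCut_iff_of_mem_cutsFinset ht hc]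
  simp only [isInternalAt_trunkTree]

theorem ownsSector_nil_iff {i : ℕ} (ht : t ≠ leaf) :
    OwnsSector t [] i ↔ i < numSectors t ∧ ∀ v ∈ childCut t, ¬ SectorIn t v i := by
  rw [OwnsSector, sectorIn_nil_iff]
  refine ⟨fun ⟨_, hi, h⟩ => ⟨hi, fun v hv => ?_⟩, fun ⟨hi, h⟩ => ?_⟩
  · obtain ⟨hint, hlen⟩ := mem_childCut.1 hv
    exact h v hint List.nil_prefix (by rintro rfl; simp at hlen)
  · refine ⟨isInternalAt_nil_iff.2 ht, hi, fun p hp _ hne hpi => ?_⟩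
    obtain ⟨v, hv, hvp⟩ := exists_mem_childCut_prefix hp hne
    exact h v hv (hpi.of_prefix hp.isVertex hvp)

variable {A : Type*} [Zero A] {w : List A}

theorem trunkWord_eq_lettersAt (t : PTree) (c : Finset (List ℕ)) (w : List A) :
    trunkWord t c w = lettersAt {i | ¬ RemovedIdx t c i} w :=
  congrArg (List.map _) (List.filter_congr fun _ _ => decide_eq_decide.2 Iff.rfl)

theorem trunkWord_childCut (ht : t ≠ leaf) (hw : w.length = numSectors t) :
    trunkWord t (childCut t) w = blockWord t [] w := by
  rw [trunkWord_eq_lettersAt, blockWord]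
  refine lettersAt_congr fun i hi => ?_
  simp [RemovedIdx, ownsSector_nil_iff ht, hw ▸ hi, sectorIn_iff_lt]

end Trunk

section Pruning

variable {A : Type*} {d : PTree × List A} {c : Finset (List ℕ)}

theorem prunePart_eq_map (d : PTree × List A) (c : Finset (List ℕ)) :
    prunePart d c = (sortCut d.1 c).map fun v => (subtree! d.1 v, subword d.1 v d.2) := rfl

theorem prunePart_singleton_nil (hd : d.2.length = numSectors d.1) : prunePart d {[]} = [d] := by
  have : sortCut d.1 {[]} = [[]] := List.perm_singleton.1 (by simpa using sortCut_perm d.1 {[]})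
  simp [prunePart, this, leavesBefore_nil, subtree!_nil, ← hd]

theorem prod_map_prunePart {M : Type*} [CommMonoid M] (f : PTree × List A → M)
    (d : PTree × List A) (c : Finset (List ℕ)) :
    ((prunePart d c).map f).prod = ∏ v ∈ c, f (subtree! d.1 v, subword d.1 v d.2) := by
  rw [prunePart_eq_map, List.map_map, ((sortCut_perm d.1 c).map _).prod_eq, Finset.prod_map_toList]
  rfl

theorem GoodTree.subtree! (hd : GoodTree d) {v : List ℕ} (hv : IsInternalAt d.1 v) :
    GoodTree (subtree! d.1 v, subword d.1 v d.2) :=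
  ⟨hd.1.subtree! v, (isInternalAt_iff.1 hv).2, length_subword hv.isVertex hd.2.2⟩

theorem GoodTree.goodForest_prunePart (hd : GoodTree d) (hc : c ∈ cutsFinset d.1) :
    GoodForest (prunePart d c) := by
  intro e he
  rw [prunePart_eq_map, List.mem_map] at he
  obtain ⟨v, hv, rfl⟩ := he
  exact hd.subtree! ((mem_cutsFinset.1 hc).1 v (mem_sortCut.1 hv))

theorem goodTree_of_mem_ST {n : ℕ} {t : PTree} {w : List A} (hn : 1 ≤ n) (ht : t ∈ ST n)
    (hw : w.length = n) : GoodTree (t, w) := by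
  refine ⟨ht.1, ?_, by simp [numSectors, ht.2, hw]⟩
  rintro rfl
  have := ht.2.symm.trans numLeaves_leaf
  omega

end Pruning

section Convolution

variable {A : Type*}

/-- A character of `H_S(A)`: a unital multiplicative functional, described on the basis of
decorated forests. -/
def IsCharD (f : DForest A → ℂ) : Prop :=
  f [] = 1 ∧ ∀ F G : DForest A, f (F ++ G) = f F * f G

theorem isCharD_epsD : IsCharD (epsD : DForest A → ℂ) := by
  refine ⟨if_pos rfl, fun F G => ?_⟩
  simp only [epsD, List.append_eq_nil_iff, ite_and]
  split_ifs <;> simp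

theorem isCharD_charD [Ring A] (φ : A → ℂ) : IsCharD (charD φ) :=
  ⟨by simp [charD], fun F G => by simp [charD]⟩

variable {f g h : DForest A → ℂ} {d : PTree × List A} {F : DForest A}

theorem IsCharD.apply_eq_prod (hf : IsCharD f) (F : DForest A) :
    f F = (F.map fun d => f [d]).prod := by
  induction F with
  | nil => exact hf.1
  | cons d F ih => rw [← List.singleton_append, hf.2, ih, List.map_append, List.prod_append,
      List.map_singleton, List.prod_singleton]

theorem goodForest_cons : GoodForest (d :: F) ↔ GoodTree d ∧ GoodForest F :=
  List.forall_mem_cons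

theorem GoodForest.append {G : DForest A} (hF : GoodForest F) (hG : GoodForest G) :
    GoodForest (F ++ G) :=
  List.forall_mem_append.2 ⟨hF, hG⟩

variable [Zero A]

theorem convD_nil (f g : DForest A → ℂ) : convD f g [] = f [] * g [] := by
  simp [convD, forestSplits]

theorem convD_cons_eq_sum (f g : DForest A → ℂ) (d : PTree × List A) (F : DForest A) :
    convD f g (d :: F) = ∑ c ∈ cutsFinset d.1,
      convD (fun P => f (trunkPart d c ++ P)) (fun P => g (prunePart d c ++ P)) F := by
  simp only [convD, forestSplits, List.flatMap_def, List.map_flatten, List.sum_flatten,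
    List.map_map, Function.comp_def, Finset.sum_map_toList]

theorem convD_singleton (f g : DForest A → ℂ) (d : PTree × List A) :
    convD f g [d] = ∑ c ∈ cutsFinset d.1, f (trunkPart d c) * g (prunePart d c) := by
  simp only [convD_cons_eq_sum, convD_nil, List.append_nil]

theorem convD_const_mul (a b : ℂ) (f g : DForest A → ℂ) (F : DForest A) :
    convD (fun P => a * f P) (fun P => b * g P) F = a * b * convD f g F := by
  simp only [convD, mul_mul_mul_comm a, List.sum_map_mul_left]

theorem IsCharD.convD_cons (hf : IsCharD f) (hg : IsCharD g) (d : PTree × List A)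
    (F : DForest A) : convD f g (d :: F) = convD f g [d] * convD f g F := by
  simp only [convD_cons_eq_sum f g d F, hf.2, hg.2, convD_const_mul, convD_singleton,
    Finset.sum_mul]

theorem IsCharD.convD (hf : IsCharD f) (hg : IsCharD g) : IsCharD (convD f g) := by
  refine ⟨by rw [convD_nil, hf.1, hg.1, one_mul], fun F G => ?_⟩
  induction F with
  | nil => rw [List.nil_append, convD_nil, hf.1, hg.1, one_mul, one_mul]
  | cons d F ih => rw [List.cons_append, hf.convD_cons hg, ih, hf.convD_cons hg d F, mul_assoc]

theorem IsCharD.convPowD (hf : IsCharD f) (k : ℕ) : IsCharD (convPowD f k) := by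
  induction k with
  | zero => exact isCharD_epsD
  | succ k ih => exact hf.convD ih

theorem convD_sub_left (f g h : DForest A → ℂ) (F : DForest A) :
    convD (fun P => f P - g P) h F = convD f h F - convD g h F := by
  simpa only [convD, sub_mul, Multiset.map_coe, Multiset.sum_coe] using
    Multiset.sum_map_sub (m := (forestSplits F : Multiset (DForest A × DForest A)))
      (f := fun x => f x.1 * h x.2) (g := fun x => g x.1 * h x.2)

theorem convD_sub_right (f g h : DForest A → ℂ) (F : DForest A) :
    convD f (fun P => g P - h P) F = convD f g F - convD f h F := by
  simpa only [convD, mul_sub, Multiset.map_coe, Multiset.sum_coe] using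
    Multiset.sum_map_sub (m := (forestSplits F : Multiset (DForest A × DForest A)))
      (f := fun x => f x.1 * g x.2) (g := fun x => f x.1 * h x.2)

theorem convD_fwdDiff_iter_right (f : DForest A → ℂ) (u : ℕ → DForest A → ℂ) (F : DForest A)
    (k n : ℕ) : convD f (fun P => (fwdDiff 1)^[k] (fun j => u j P) n) F =
      (fwdDiff 1)^[k] (fun j => convD f (u j) F) n := by
  induction k generalizing n with
  | zero => rfl
  | succ k ih => simp only [Function.iterate_succ_apply', fwdDiff, convD_sub_right, ih]

theorem trunkPart_singleton_nil (ht : d.1 ≠ leaf) : trunkPart d {[]} = [] :=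
  if_pos ((trunkTree_eq_leaf_iff ht (singleton_nil_mem_cutsFinset ht)).2 rfl)

theorem trunkPart_eq_singleton {c : Finset (List ℕ)} (ht : d.1 ≠ leaf) (hc : c ∈ cutsFinset d.1)
    (hne : c ≠ {[]}) : trunkPart d c = [(trunkTree d.1 c, trunkWord d.1 c d.2)] :=
  if_neg (hne ∘ (trunkTree_eq_leaf_iff ht hc).1)

theorem convD_epsD_left (g : DForest A → ℂ) (hF : GoodForest F) : convD epsD g F = g F := by
  induction F generalizing g with
  | nil => rw [convD_nil, isCharD_epsD.1, one_mul]
  | cons d F ih =>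
    obtain ⟨hd, hF⟩ := goodForest_cons.1 hF
    have hcut (c) : convD (fun P => epsD (trunkPart d c ++ P)) (fun P => g (prunePart d c ++ P)) F =
        epsD (trunkPart d c) * g (prunePart d c ++ F) := by
      have := convD_const_mul (epsD (trunkPart d c)) 1 epsD (fun P => g (prunePart d c ++ P)) F
      simpa only [isCharD_epsD.2, one_mul, mul_one, ih _ hF] using this
    rw [convD_cons_eq_sum, Finset.sum_eq_single_of_mem {[]} (singleton_nil_mem_cutsFinset hd.2.1),
      hcut, trunkPart_singleton_nil hd.2.1, prunePart_singleton_nil hd.2.2, isCharD_epsD.1, one_mul,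
      List.singleton_append]
    intro c hc hne
    rw [hcut, trunkPart_eq_singleton hd.2.1 hc hne, epsD, if_neg (List.cons_ne_nil _ _), zero_mul]

theorem goodForest_of_mem_forestSplits {x : DForest A × DForest A} (hF : GoodForest F)
    (hx : x ∈ forestSplits F) : GoodForest x.2 := by
  induction F generalizing x with
  | nil => simp_all [forestSplits]
  | cons d F ih =>
    obtain ⟨hd, hF⟩ := goodForest_cons.1 hF
    simp only [forestSplits, List.mem_flatMap, Finset.mem_toList, List.mem_map] at hx
    obtain ⟨c, hc, y, hy, rfl⟩ := hx
    exact (hd.goodForest_prunePart hc).append (ih hF hy)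

theorem convD_congr_right (f : DForest A → ℂ) (hF : GoodForest F)
    (hgh : ∀ P, GoodForest P → g P = h P) : convD f g F = convD f h F := by
  refine congrArg List.sum (List.map_congr_left fun x hx => ?_)
  rw [hgh x.2 (goodForest_of_mem_forestSplits hF hx)]

theorem convPowD_sub_epsD (f : DForest A → ℂ) (hF : GoodForest F) (k : ℕ) :
    convPowD (fun P => f P - epsD P) k F = (fwdDiff 1)^[k] (fun j => convPowD f j F) 0 := by
  induction k generalizing F with
  | zero => rfl
  | succ k ih =>
    calc convPowD (fun P => f P - epsD P) (k + 1) F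
        = convD f (convPowD (fun P => f P - epsD P) k) F -
            convPowD (fun P => f P - epsD P) k F := by
          rw [convPowD, convD_sub_left, convD_epsD_left _ hF]
      _ = (fwdDiff 1)^[k] (fun j => convPowD f (j + 1) F) 0 -
            (fwdDiff 1)^[k] (fun j => convPowD f j F) 0 := by
          rw [ih hF, convD_congr_right f hF fun P hP => ih hP, convD_fwdDiff_iter_right]
          rfl
      _ = (fwdDiff 1)^[k + 1] (fun j => convPowD f j F) 0 := by
          rw [fwdDiff_iter_comp_add 1 (fun j => convPowD f j F), Function.iterate_succ_apply',
            fwdDiff]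

end Convolution

section Logarithm

variable {A : Type*} [Ring A] {d : PTree × List A}

theorem charD_trunkPart (φ : A → ℂ) (hd : GoodTree d) {c : Finset (List ℕ)}
    (hc : c ∈ cutsFinset d.1) (hne : c ≠ {[]}) :
    charD φ (trunkPart d c) =
      if c = childCut d.1 then φ (blockWord d.1 [] d.2).prod else 0 := by
  simp only [trunkPart_eq_singleton hd.2.1 hc hne, charD, List.map_singleton, List.prod_singleton,
    isCorolla_trunkTree_iff hd.1 hd.2.1 hc]
  refine ite_congr rfl (fun h => ?_) fun _ => rfl
  rw [h, trunkWord_childCut hd.2.1 hd.2.2]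

theorem convD_charD_singleton (φ : A → ℂ) (g : DForest A → ℂ) (hd : GoodTree d) :
    convD (charD φ) g [d] =
      g [d] + φ (blockWord d.1 [] d.2).prod * g (prunePart d (childCut d.1)) := by
  have hnil := singleton_nil_mem_cutsFinset hd.2.1
  have hchild := childCut_mem_cutsFinset d.1
  have hne := singleton_nil_ne_childCut d.1
  rw [convD_singleton, Finset.sum_eq_add_of_mem _ _ hnil hchild hne,
    trunkPart_singleton_nil hd.2.1, prunePart_singleton_nil hd.2.2, (isCharD_charD φ).1, one_mul,
    charD_trunkPart φ hd hchild hne.symm, if_pos rfl]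
  rintro c hc ⟨hc_nil, hc_child⟩
  rw [charD_trunkPart φ hd hc hc_nil, if_neg hc_child, zero_mul]

theorem convPowD_charD_singleton (φ : A → ℂ) (hd : GoodTree d) (k : ℕ) :
    convPowD (charD φ) k [d] = strictOrderCount (Skeleton d.1) k * phiPi φ d.1 d.2 := by
  induction k generalizing d with
  | zero => simp [convPowD, epsD, strictOrderCount_skeleton_zero hd.2.1]
  | succ k ih =>
    have hchildren : convPowD (charD φ) k (prunePart d (childCut d.1)) =
        ∏ v ∈ childCut d.1, (strictOrderCount (Skeleton (subtree! d.1 v)) k : ℂ) *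
          phiPi φ (subtree! d.1 v) (subword d.1 v d.2) := by
      rw [((isCharD_charD φ).convPowD k).apply_eq_prod, prod_map_prunePart]
      exact Finset.prod_congr rfl fun v hv => ih (hd.subtree! (mem_childCut.1 hv).1)
    rw [convPowD, convD_charD_singleton φ _ hd, ih hd, hchildren, Finset.prod_mul_distrib,
      strictOrderCount_skeleton_succ hd.2.1, phiPi_eq_mul_prod φ hd.2.1 hd.2.2]
    push_cast
    ring

theorem convPowD_charHatD_singleton (φ : A → ℂ) (hd : GoodTree d) (k : ℕ) :
    convPowD (charHatD φ) k [d] = omegaSkK d.1 k * phiPi φ d.1 d.2 := by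
  have hF : GoodForest [d] := goodForest_cons.2 ⟨hd, List.forall_mem_nil _⟩
  refine (convPowD_sub_epsD (charD φ) hF k).trans ?_
  simp only [convPowD_charD_singleton φ hd, mul_comm _ (phiPi φ d.1 d.2)]
  rw [omegaSkK_eq_surjStrictOrderCount, ← fwdDiff_iter_strictOrderCount ℂ, ← smul_eq_mul]
  exact congrFun (fwdDiff_iter_const_smul 1 (phiPi φ d.1 d.2) _ k) 0

end Logarithm

end PTree

theorem logStar_on_decorated_schroder_trees_general {A : Type*} [Ring A] (φ : A → ℂ)
    {t : PTree} {w : List A} (hd : PTree.GoodTree (t, w)) :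
    PTree.logStarD φ [(t, w)] = PTree.omegaSk t * PTree.phiPi φ t w := by
  have hterm (k : ℕ) : (-1 : ℂ) ^ (k + 1) / k * PTree.convPowD (PTree.charHatD φ) k [(t, w)] =
      (-1 : ℂ) ^ (k + 1) / k * PTree.omegaSkK t k * PTree.phiPi φ t w := by
    rw [PTree.convPowD_charHatD_singleton φ hd, mul_assoc]
  have hvanish (k : ℕ) (hk : PTree.numInternal t < k) : PTree.omegaSkK t k = 0 := by
    rw [PTree.omegaSkK_eq_surjStrictOrderCount]
    exact surjStrictOrderCount_eq_zero (PTree.numInternal_eq_card_skeleton t ▸ hk)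
  rw [PTree.logStarD, PTree.omegaSk, Finset.sum_mul]
  simp only [hterm]
  refine finsum_mem_eq_sum_of_inter_support_eq _ (Set.ext fun k => and_congr_left fun hk => ?_)
  rw [Finset.coe_Icc, Set.mem_Icc, Set.mem_Ici, iff_self_and]
  refine fun _ => not_lt.1 fun hlt => hk ?_
  simp only [hvanish k hlt, Nat.cast_zero, mul_zero, zero_mul]

/-- Let `(A, φ)` be a noncommutative probability space, `Φ̃ : H_S(A) → ℂ`
the character extending `φ`, and `ρ̃ = log^*(Φ̃) = Σ_{k≥1} ((−1)^{k+1}/k) (Φ̃ − ε_A)^{*k}`.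
Then for every `n ≥ 1`, every `t ∈ ST(n)` and every word `w = a_1 ⋯ a_n`:
`ρ̃(t ⊗ w) = ω(sk(t)) · φ_{π(t)}(a_1,…,a_n)`. -/
theorem logStar_on_decorated_schroder_trees
    (A : Type*) [Ring A] [Algebra ℂ A] (φ : A →ₗ[ℂ] ℂ) (hφ : φ 1 = 1)
    (n : ℕ) (hn : 1 ≤ n) (t : PTree) (ht : t ∈ PTree.ST n)
    (w : List A) (hw : w.length = n) :
    PTree.logStarD (fun x => φ x) [(t, w)] =
      PTree.omegaSk t * PTree.phiPi (fun x => φ x) t w :=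
  logStar_on_decorated_schroder_trees_general (fun x => φ x) (PTree.goodTree_of_mem_ST hn ht hw)
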